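/- arXiv:2203.16186 — 2 statements merged into one kernel-verified Lean document; each statement's English description precedes it below -/
import Mathlib

section
/- Let T be a tree on n ≥ 4 vertices with diam(T) = 2d+1 for some positive integer d. Then the rank of the eccentricity matrix 𝓔(T) is 4. -/
open SimpleGraph Finset Matrix Polynomial

/-- The eccentricity of a vertex: the greatest distance from `u` to any vertex. -/
noncomputable def ecc {V : Type*} [Fintype V] (G : SimpleGraph V) (u : V) : ℕ :=
  Finset.univ.sup fun v => G.dist u v

/-- The diameter of a graph: the greatest distance between any pair of vertices. -/
noncomputable def gdiam {V : Type*} [Fintype V] (G : SimpleGraph V) : ℕ :=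
  Finset.univ.sup fun p : V × V => G.dist p.1 p.2

/-- The eccentricity matrix: `(u,v)` entry is `d(u,v)` if `d(u,v) = min (e u) (e v)`,
and `0` otherwise. -/
noncomputable def eccMatrix {V : Type*} [Fintype V] (G : SimpleGraph V) : Matrix V V ℝ :=
  Matrix.of fun u v =>
    if G.dist u v = min (ecc G u) (ecc G v) then (G.dist u v : ℝ) else 0

/-!
A longest path of odd length `2d + 1` has a middle edge `ce`, and in a tree this edge is a bridge.
Two vertices on opposite sides of the bridge are at distance `a u + a v + 1`, where `a` is the
distance to the edge, whereas two vertices on the same side are at distance at most `a u + a v`.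
Since `a ≤ d`, with equality attained on both sides, every eccentricity is `a u + d + 1`. Hence
`𝓔 u v` is nonzero exactly when `u` and `v` lie on opposite sides and at least one of them is
peripheral, i.e. has eccentricity `D = 2d + 1`; the entry is then the smaller eccentricity. After
dividing row and column `u` by `ecc u` for every non-peripheral `u`, the entry depends only on
the side and the peripherality of the two vertices: the matrix is a blow-up of the invertible
`4 × 4` matrix `!![0, 1; 1, 0] ⊗ₖ !![D, 1; 1, 0]`.
-/

open scoped Kronecker

section Rank

variable {R m n m' n' : Type*}

lemma rank_submatrix_of_surjective [CommSemiring R] [StrongRankCondition R] [Fintype n]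
    [Fintype n'] (A : Matrix m n R) {f : m' → m} {g : n' → n} (hf : f.Surjective)
    (hg : g.Surjective) : (A.submatrix f g).rank = A.rank := by
  obtain ⟨f', hf'⟩ := hf.hasRightInverse
  obtain ⟨g', hg'⟩ := hg.hasRightInverse
  refine (rank_submatrix_le A f g).antisymm ?_
  simpa only [submatrix_submatrix, hf'.comp_eq_id, hg'.comp_eq_id, submatrix_id_id]
    using rank_submatrix_le (A.submatrix f g) f' g'

lemma rank_of_mul_mul_of_ne_zero [CommRing R] [IsDomain R] [Finite m] [Fintype n]
    (A : Matrix m n R) {r : m → R} {c : n → R} (hr : ∀ i, r i ≠ 0)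
    (hc : ∀ j, c j ≠ 0) :
    (Matrix.of fun i j => r i * A i j * c j).rank = A.rank := by
  classical
  have := Fintype.ofFinite m
  have hdiag : (Matrix.of fun i j => r i * A i j * c j) = diagonal r * A * diagonal c := by
    ext i j
    simp only [of_apply, mul_diagonal, diagonal_mul]
  rw [hdiag, rank_mul_eq_left_of_det_ne_zero _ _ (by simp [Finset.prod_ne_zero_iff, hc]),
    rank_mul_eq_right_of_det_ne_zero _ _ (by simp [Finset.prod_ne_zero_iff, hr])]

end Rank

/-- The `4 × 4` quotient of the eccentricity matrix of a graph of diameter `D` cut by a central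
bridge. The first coordinate of an index is the side of the bridge; the second is `0` for
peripheral and `1` for other vertices. -/
def quotientMatrix {R : Type*} [CommRing R] (D : R) : Matrix (Fin 2 × Fin 2) (Fin 2 × Fin 2) R :=
  !![0, 1; 1, 0] ⊗ₖ !![D, 1; 1, 0]

lemma rank_quotientMatrix {R : Type*} [CommRing R] [Nontrivial R] (D : R) :
    (quotientMatrix D).rank = 4 := by
  have hdet : (quotientMatrix D).det = 1 := by
    simp [quotientMatrix, det_kronecker, det_fin_two_of]
  rw [rank_of_isUnit _ ((isUnit_iff_isUnit_det _).2 (hdet ▸ isUnit_one))]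
  rfl

section Eccentricity

variable {V : Type*} [Fintype V] {G : SimpleGraph V}

lemma dist_le_ecc (u v : V) : G.dist u v ≤ ecc G u :=
  Finset.le_sup (f := fun v => G.dist u v) (Finset.mem_univ v)

lemma dist_le_gdiam (u v : V) : G.dist u v ≤ gdiam G :=
  Finset.le_sup (f := fun p : V × V => G.dist p.1 p.2) (Finset.mem_univ (u, v))

lemma ecc_le_gdiam (u : V) : ecc G u ≤ gdiam G :=
  Finset.sup_le fun v _ => dist_le_gdiam u v

lemma exists_dist_eq_gdiam (h : gdiam G ≠ 0) : ∃ x y, G.dist x y = gdiam G := by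
  have : Nonempty V := not_isEmpty_iff.1 fun _ => h (by simp [gdiam])
  obtain ⟨p, -, hp⟩ :=
    Finset.exists_mem_eq_sup Finset.univ Finset.univ_nonempty fun p : V × V => G.dist p.1 p.2
  exact ⟨p.1, p.2, hp.symm⟩

open Classical in
/-- The index in `quotientMatrix` of a vertex: its side of the cut `S`, and whether it is
peripheral. -/
noncomputable def cutClass (G : SimpleGraph V) (S : Set V) (u : V) : Fin 2 × Fin 2 :=
  (if u ∈ S then 0 else 1, if ecc G u = gdiam G then 0 else 1)

/-- The factor by which row and column `u` of the blown-up `quotientMatrix` are scaled in the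
eccentricity matrix. -/
noncomputable def cutWeight (G : SimpleGraph V) (u : V) : ℝ :=
  if ecc G u = gdiam G then 1 else ecc G u

lemma cutWeight_ne_zero {u : V} (hu : ecc G u ≠ 0) : cutWeight G u ≠ 0 := by
  unfold cutWeight
  split_ifs
  exacts [one_ne_zero, Nat.cast_ne_zero.2 hu]

lemma cutClass_surjective {S : Set V}
    (hS : ∃ x ∈ S, ecc G x = gdiam G) (hS' : ∃ c ∈ S, ecc G c ≠ gdiam G)
    (hSc : ∃ y ∉ S, ecc G y = gdiam G) (hSc' : ∃ e ∉ S, ecc G e ≠ gdiam G) :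
    (cutClass G S).Surjective := by
  obtain ⟨x, hx, hx'⟩ := hS
  obtain ⟨c, hc, hc'⟩ := hS'
  obtain ⟨y, hy, hy'⟩ := hSc
  obtain ⟨e, he, he'⟩ := hSc'
  rintro ⟨i, j⟩
  fin_cases i <;> fin_cases j
  exacts [⟨x, by simp [cutClass, *]⟩, ⟨c, by simp [cutClass, *]⟩, ⟨y, by simp [cutClass, *]⟩,
    ⟨e, by simp [cutClass, *]⟩]

lemma eccMatrix_apply_eq_cutWeight_mul {S : Set V} {u v : V}
    (hsame : (u ∈ S ↔ v ∈ S) → G.dist u v < min (ecc G u) (ecc G v))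
    (hcross : ¬(u ∈ S ↔ v ∈ S) → G.dist u v + gdiam G = ecc G u + ecc G v) :
    eccMatrix G u v = cutWeight G u *
      quotientMatrix (gdiam G : ℝ) (cutClass G S u) (cutClass G S v) * cutWeight G v := by
  have hu := ecc_le_gdiam (G := G) u
  have hv := ecc_le_gdiam (G := G) v
  by_cases huv : u ∈ S ↔ v ∈ S
  · have hzero : eccMatrix G u v = 0 := if_neg (hsame huv).ne
    by_cases hvS : v ∈ S <;> simp [hzero, quotientMatrix, cutClass, huv, hvS]
  · have hdist := hcross huv
    have hsides : (u ∈ S ∧ v ∉ S) ∨ (u ∉ S ∧ v ∈ S) := by tauto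
    have hentry : G.dist u v = min (ecc G u) (ecc G v) ↔
        ecc G u = gdiam G ∨ ecc G v = gdiam G := by omega
    have hpu : ecc G u = gdiam G → G.dist u v = ecc G v := by omega
    have hpv : ecc G v = gdiam G → G.dist u v = ecc G u := by omega
    by_cases hu' : ecc G u = gdiam G <;> by_cases hv' : ecc G v = gdiam G <;>
      rcases hsides with ⟨huS, hvS⟩ | ⟨huS, hvS⟩ <;>
      simp [eccMatrix, quotientMatrix, cutClass, cutWeight, *]

theorem rank_eccMatrix_eq_four_of_cut {S : Set V}
    (hsame : ∀ u v, (u ∈ S ↔ v ∈ S) → G.dist u v < min (ecc G u) (ecc G v))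
    (hcross : ∀ u v, ¬(u ∈ S ↔ v ∈ S) → G.dist u v + gdiam G = ecc G u + ecc G v)
    (hS : ∃ x ∈ S, ecc G x = gdiam G) (hS' : ∃ c ∈ S, ecc G c ≠ gdiam G)
    (hSc : ∃ y ∉ S, ecc G y = gdiam G) (hSc' : ∃ e ∉ S, ecc G e ≠ gdiam G) :
    (eccMatrix G).rank = 4 := by
  have hweight (u : V) : cutWeight G u ≠ 0 :=
    cutWeight_ne_zero ((Nat.zero_le _).trans_lt (min_self (ecc G u) ▸ hsame u u Iff.rfl)).ne'
  have hblowup : eccMatrix G = Matrix.of fun u v => cutWeight G u *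
      (quotientMatrix (gdiam G : ℝ)).submatrix (cutClass G S) (cutClass G S) u v *
        cutWeight G v :=
    Matrix.ext fun u v => eccMatrix_apply_eq_cutWeight_mul (hsame u v) (hcross u v)
  have hclass := cutClass_surjective hS hS' hSc hSc'
  rw [hblowup, rank_of_mul_mul_of_ne_zero _ hweight hweight,
    rank_submatrix_of_surjective _ hclass hclass, rank_quotientMatrix]

end Eccentricity

section Bridge

variable {V : Type*} {G : SimpleGraph V} {c e u v w : V}

/-- The vertices that remain connected to `c` once the edge `ce` is deleted: the side of `c` when
`ce` is a bridge. -/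
def bridgeSide (G : SimpleGraph V) (c e : V) : Set V :=
  {u | (G.deleteEdges {s(c, e)}).Reachable c u}

/-- The distance from a vertex to the edge `ce`. -/
noncomputable def distEdge (G : SimpleGraph V) (c e u : V) : ℕ :=
  min (G.dist c u) (G.dist e u)

lemma left_mem_bridgeSide : c ∈ bridgeSide G c e :=
  Reachable.refl c

lemma right_notMem_bridgeSide (hb : G.IsBridge s(c, e)) : e ∉ bridgeSide G c e :=
  isBridge_iff.1 hb

lemma eq_and_eq_of_adj_of_mem_bridgeSide (hb : G.IsBridge s(c, e)) (huw : G.Adj u w)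
    (hu : u ∈ bridgeSide G c e) (hw : w ∉ bridgeSide G c e) : u = c ∧ w = e := by
  have hedge : s(u, w) = s(c, e) := by
    by_contra hne
    exact hw (hu.trans (Adj.reachable (deleteEdges_adj.2 ⟨huw, hne⟩)))
  rcases Sym2.eq_iff.1 hedge with h | ⟨rfl, -⟩
  · exact h
  · exact absurd hu (right_notMem_bridgeSide hb)

lemma dist_add_one_add_dist_le_length (hG : G.Connected) (hb : G.IsBridge s(c, e))
    (hu : u ∈ bridgeSide G c e) (hv : v ∉ bridgeSide G c e) (p : G.Walk u v) :
    G.dist c u + 1 + G.dist e v ≤ p.length := by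
  induction p with
  | nil => exact absurd hu hv
  | @cons u w v huw q ih =>
    rw [Walk.length_cons]
    by_cases hw : w ∈ bridgeSide G c e
    · have hle : G.dist c u ≤ G.dist c w + G.dist w u := hG.dist_triangle
      have hone : G.dist w u = 1 := dist_eq_one_iff_adj.2 huw.symm
      have := ih hw hv
      omega
    · obtain ⟨rfl, rfl⟩ := eq_and_eq_of_adj_of_mem_bridgeSide hb huw hu hw
      have hle := dist_le q
      rw [dist_self]
      omega

lemma dist_eq_dist_add_one_add_dist (hG : G.Connected) (hb : G.IsBridge s(c, e))
    (hu : u ∈ bridgeSide G c e) (hv : v ∉ bridgeSide G c e) :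
    G.dist u v = G.dist c u + 1 + G.dist e v := by
  obtain ⟨p, hp⟩ := hG.exists_walk_length_eq_dist u v
  refine le_antisymm ?_ (hp ▸ dist_add_one_add_dist_le_length hG hb hu hv p)
  have huv : G.dist u v ≤ G.dist u c + G.dist c v := hG.dist_triangle
  have hcv : G.dist c v ≤ G.dist c e + G.dist e v := hG.dist_triangle
  have hce : G.dist c e = 1 := dist_eq_one_iff_adj.2 (hb.reachable_iff_adj.1 (hG c e))
  have hcu : G.dist u c = G.dist c u := dist_comm
  omega

lemma dist_right_eq_of_mem_bridgeSide (hG : G.Connected) (hb : G.IsBridge s(c, e))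
    (hu : u ∈ bridgeSide G c e) : G.dist e u = G.dist c u + 1 := by
  rw [dist_comm, dist_eq_dist_add_one_add_dist hG hb hu (right_notMem_bridgeSide hb), dist_self]

lemma dist_left_eq_of_notMem_bridgeSide (hG : G.Connected) (hb : G.IsBridge s(c, e))
    (hv : v ∉ bridgeSide G c e) : G.dist c v = G.dist e v + 1 := by
  rw [dist_eq_dist_add_one_add_dist hG hb left_mem_bridgeSide hv, dist_self, zero_add, add_comm]

lemma distEdge_of_mem_bridgeSide (hG : G.Connected) (hb : G.IsBridge s(c, e))
    (hu : u ∈ bridgeSide G c e) : distEdge G c e u = G.dist c u := by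
  rw [distEdge, dist_right_eq_of_mem_bridgeSide hG hb hu, min_eq_left (Nat.le_succ _)]

lemma distEdge_of_notMem_bridgeSide (hG : G.Connected) (hb : G.IsBridge s(c, e))
    (hv : v ∉ bridgeSide G c e) : distEdge G c e v = G.dist e v := by
  rw [distEdge, dist_left_eq_of_notMem_bridgeSide hG hb hv, min_eq_right (Nat.le_succ _)]

lemma dist_eq_distEdge_add_distEdge_add_one (hG : G.Connected) (hb : G.IsBridge s(c, e))
    (huv : ¬(u ∈ bridgeSide G c e ↔ v ∈ bridgeSide G c e)) :
    G.dist u v = distEdge G c e u + distEdge G c e v + 1 := by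
  wlog hu : u ∈ bridgeSide G c e generalizing u v
  · rw [dist_comm, this (fun h => huv h.symm) (by tauto), add_comm (distEdge G c e v)]
  have hv : v ∉ bridgeSide G c e := by tauto
  rw [dist_eq_dist_add_one_add_dist hG hb hu hv, distEdge_of_mem_bridgeSide hG hb hu,
    distEdge_of_notMem_bridgeSide hG hb hv, add_right_comm]

lemma dist_le_distEdge_add_distEdge (hG : G.Connected) (hb : G.IsBridge s(c, e))
    (huv : u ∈ bridgeSide G c e ↔ v ∈ bridgeSide G c e) :
    G.dist u v ≤ distEdge G c e u + distEdge G c e v := by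
  by_cases hu : u ∈ bridgeSide G c e
  · rw [distEdge_of_mem_bridgeSide hG hb hu, distEdge_of_mem_bridgeSide hG hb (huv.1 hu),
      dist_comm (u := c) (v := u)]
    exact hG.dist_triangle
  · rw [distEdge_of_notMem_bridgeSide hG hb hu,
      distEdge_of_notMem_bridgeSide hG hb (mt huv.2 hu), dist_comm (u := e) (v := u)]
    exact hG.dist_triangle

lemma exists_adj_dist_eq_of_dist_eq_add {x y : V} {m n : ℕ} (hxy : G.dist x y = m + 1 + n) :
    ∃ c e, G.Adj c e ∧ G.dist x c = m ∧ G.dist e y = n := by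
  obtain ⟨p, hp⟩ := exists_walk_of_dist_ne_zero (hxy ▸ by omega : G.dist x y ≠ 0)
  refine ⟨p.getVert m, p.getVert (m + 1), p.adj_getVert_succ (by omega), ?_, ?_⟩
  · rw [← length_eq_dist_of_subwalk hp (p.isSubwalk_take m), Walk.take_length]
    omega
  · rw [← length_eq_dist_of_subwalk hp (p.isSubwalk_drop (m + 1)), Walk.drop_length]
    omega

lemma mem_and_notMem_bridgeSide {x y : V} {d : ℕ} (hG : G.Connected) (hb : G.IsBridge s(c, e))
    (hxc : G.dist x c = d) (hey : G.dist e y = d) (hxy : G.dist x y = 2 * d + 1) :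
    x ∈ bridgeSide G c e ∧ y ∉ bridgeSide G c e := by
  constructor
  · by_contra hx
    have hcx := dist_left_eq_of_notMem_bridgeSide hG hb hx
    have htri : G.dist x y ≤ G.dist x e + G.dist e y := hG.dist_triangle
    rw [dist_comm (u := c)] at hcx
    rw [dist_comm (u := x) (v := e)] at htri
    omega
  · intro hy
    have hey' := dist_right_eq_of_mem_bridgeSide hG hb hy
    have htri : G.dist x y ≤ G.dist x c + G.dist c y := hG.dist_triangle
    omega

end Bridge

section CentralBridge

variable {V : Type*} [Fintype V] {G : SimpleGraph V} {c e : V} {d : ℕ}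

lemma distEdge_le_of_gdiam_eq (hG : G.Connected) (hb : G.IsBridge s(c, e))
    (hdiam : gdiam G = 2 * d + 1)
    (hopp : ∀ u, ∃ z, ¬(u ∈ bridgeSide G c e ↔ z ∈ bridgeSide G c e) ∧ distEdge G c e z = d)
    (u : V) : distEdge G c e u ≤ d := by
  obtain ⟨z, hz, hzd⟩ := hopp u
  have hdist := dist_eq_distEdge_add_distEdge_add_one hG hb hz
  have hle := dist_le_gdiam (G := G) u z
  omega

lemma ecc_eq_distEdge_add (hG : G.Connected) (hb : G.IsBridge s(c, e))
    (hle : ∀ u, distEdge G c e u ≤ d)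
    (hopp : ∀ u, ∃ z, ¬(u ∈ bridgeSide G c e ↔ z ∈ bridgeSide G c e) ∧ distEdge G c e z = d)
    (u : V) : ecc G u = distEdge G c e u + d + 1 := by
  apply le_antisymm
  · refine Finset.sup_le fun v _ => ?_
    have hv := hle v
    by_cases huv : u ∈ bridgeSide G c e ↔ v ∈ bridgeSide G c e
    · have hdist := dist_le_distEdge_add_distEdge hG hb huv
      omega
    · have hdist := dist_eq_distEdge_add_distEdge_add_one hG hb huv
      omega
  · obtain ⟨z, hz, hzd⟩ := hopp u
    rw [← hzd, ← dist_eq_distEdge_add_distEdge_add_one hG hb hz]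
    exact dist_le_ecc u z

lemma exists_isBridge_of_gdiam_eq (hG : G.IsAcyclic) (hdiam : gdiam G = 2 * d + 1) :
    ∃ c e x y, G.IsBridge s(c, e) ∧ G.dist x c = d ∧ G.dist e y = d ∧
      G.dist x y = 2 * d + 1 := by
  obtain ⟨x, y, hxy⟩ := exists_dist_eq_gdiam (hdiam ▸ Nat.succ_ne_zero _ : gdiam G ≠ 0)
  obtain ⟨c, e, hce, hxc, hey⟩ : ∃ c e, G.Adj c e ∧ G.dist x c = d ∧ G.dist e y = d :=
    exists_adj_dist_eq_of_dist_eq_add (by omega)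
  exact ⟨c, e, x, y, isAcyclic_iff_forall_adj_isBridge.1 hG hce, hxc, hey, hxy.trans hdiam⟩

theorem stmt1_general {x y : V} (hG : G.Connected) (hb : G.IsBridge s(c, e))
    (hxc : G.dist x c = d) (hey : G.dist e y = d) (hxy : G.dist x y = 2 * d + 1)
    (hd : 1 ≤ d) (hdiam : gdiam G = 2 * d + 1) : (eccMatrix G).rank = 4 := by
  obtain ⟨hx, hy⟩ := mem_and_notMem_bridgeSide hG hb hxc hey hxy
  have hxd : distEdge G c e x = d := by rw [distEdge_of_mem_bridgeSide hG hb hx, dist_comm, hxc]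
  have hyd : distEdge G c e y = d := by rw [distEdge_of_notMem_bridgeSide hG hb hy, hey]
  have hcd : distEdge G c e c = 0 := by simp [distEdge]
  have hed : distEdge G c e e = 0 := by simp [distEdge]
  have hopp (u : V) :
      ∃ z, ¬(u ∈ bridgeSide G c e ↔ z ∈ bridgeSide G c e) ∧ distEdge G c e z = d := by
    by_cases hu : u ∈ bridgeSide G c e
    exacts [⟨y, by tauto, hyd⟩, ⟨x, by tauto, hxd⟩]
  have hle := distEdge_le_of_gdiam_eq hG hb hdiam hopp
  have hecc := ecc_eq_distEdge_add hG hb hle hopp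
  refine rank_eccMatrix_eq_four_of_cut (S := bridgeSide G c e) (fun u v huv => ?_)
    (fun u v huv => ?_) ⟨x, hx, ?_⟩ ⟨c, left_mem_bridgeSide, ?_⟩ ⟨y, hy, ?_⟩
    ⟨e, right_notMem_bridgeSide hb, ?_⟩
  · have hdist := dist_le_distEdge_add_distEdge hG hb huv
    have hu := hle u
    have hv := hle v
    rw [hecc, hecc]
    omega
  · rw [dist_eq_distEdge_add_distEdge_add_one hG hb huv, hecc, hecc, hdiam]
    omega
  all_goals rw [hecc, hdiam]; omega

end CentralBridge

/-- A tree on `n ≥ 4` vertices with odd diameter `2d+1` has eccentricity matrix of rank `4`. -/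
theorem stmt1 {V : Type*} [Fintype V] [DecidableEq V] (T : SimpleGraph V) (n d : ℕ)
    (hT : T.IsTree) (hn : Fintype.card V = n) (h4 : 4 ≤ n) (hd : 1 ≤ d)
    (hdiam : gdiam T = 2*d + 1) :
    (eccMatrix T).rank = 4 := by
  obtain ⟨c, e, x, y, hb, hxc, hey, hxy⟩ := exists_isBridge_of_gdiam_eq hT.isAcyclic hdiam
  exact stmt1_general hT.connected hb hxc hey hxy hd hdiam
end

section
/- Let T be a tree on n vertices with diam(T) = 2d for an integer d ≥ 2, let u₀ be the center of T, and let u₁, …, u_l (l ≥ 2) be exactly those neighbours of u₀ such that e_{T_i}(u_i) = d−1, where T_i is the component of T − (⋃_{i=1}^l {u₀, u_i}) containing u_i. Then the inertia of 𝓔(T) is (l, l, n−2l), i.e., 𝓔(T) has exactly l positive eigenvalues, l negative eigenvalues, and n−2l zero eigenvalues. -/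
open SimpleGraph Finset Matrix Polynomial

open Classical in
/-- The eccentricity of `u` within its connected component of `G`. -/
noncomputable def eccWithin {V : Type*} [Fintype V] (G : SimpleGraph V) (u : V) : ℕ :=
  Finset.univ.sup fun v => if G.Reachable u v then G.dist u v else 0

/-- For a neighbour `v` of `u₀`, the eccentricity of `v` within the component containing `v`
of the graph obtained from `T` by deleting the edge `u₀v`. -/
noncomputable def branchEcc {V : Type*} [Fintype V] [DecidableEq V]
    (T : SimpleGraph V) (u₀ v : V) : ℕ :=
  eccWithin (T.deleteEdges {s(u₀, v)}) v

/-- The number of positive eigenvalues (with multiplicity) of a real matrix,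
counted as roots of the characteristic polynomial. -/
noncomputable def posEigs {m : Type*} [Fintype m] [DecidableEq m] (M : Matrix m m ℝ) : ℕ :=
  Multiset.card (M.charpoly.roots.filter fun x => 0 < x)

/-- The number of negative eigenvalues (with multiplicity). -/
noncomputable def negEigs {m : Type*} [Fintype m] [DecidableEq m] (M : Matrix m m ℝ) : ℕ :=
  Multiset.card (M.charpoly.roots.filter fun x => x < 0)

/-- The number of zero eigenvalues (with multiplicity). -/
noncomputable def zeroEigs {m : Type*} [Fintype m] [DecidableEq m] (M : Matrix m m ℝ) : ℕ :=
  Multiset.card (M.charpoly.roots.filter fun x => x = 0)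

/-
Every vertex `v` has eccentricity `d + dist u₀ v`. Hence the entry of the eccentricity matrix at
`x`, `y` is nonzero exactly when one of the two vertices is deep (at distance `d` from `u₀`) and the
path between them passes through `u₀`, and then it is `dist u₀ x + dist u₀ y`. So the row of a deep
vertex depends only on the branch containing it, and the matrix is `D * Eᵀ + E * Dᵀ`, where `D` and
`E` have one column for each of the `l` branches with deep vertices. The rows of `u₀`, of the `uᵢ`
and of one deep vertex per branch show that the `2 * l` columns of `D` and `E` are linearly
independent. Since `D * Eᵀ + E * Dᵀ = ½ (D + E) (D + E)ᵀ - ½ (D - E) (D - E)ᵀ`, Sylvester's law of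
inertia concludes.
-/

section Signature

variable {𝕜 M M' : Type*} [Field 𝕜] [LinearOrder 𝕜] [AddCommGroup M] [Module 𝕜 M]
  [FiniteDimensional 𝕜 M] [AddCommGroup M'] [Module 𝕜 M'] [FiniteDimensional 𝕜 M']

theorem sigPos_comp_le (Q : QuadraticForm 𝕜 M) (f : M' →ₗ[𝕜] M) :
    sigPos (Q.comp f) ≤ sigPos Q := by
  obtain ⟨W, hW, hpos⟩ := exists_finrank_eq_sigPos_and_posDef (Q.comp f)
  have hker : LinearMap.ker (f.domRestrict W) = ⊥ := by
    refine LinearMap.ker_eq_bot'.mpr fun x hx ↦ by_contra fun hx0 ↦ (hpos x hx0).ne' ?_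
    have hfx : f x = 0 := hx
    simp [hfx]
  have hmap : (Q.restrict (W.map f)).PosDef := by
    rintro ⟨_, x, hx, rfl⟩ hfx
    refine hpos ⟨x, hx⟩ fun hx0 ↦ hfx ?_
    have hx0' : x = 0 := congrArg Subtype.val hx0
    simp [hx0']
  rw [← hW, ← LinearMap.finrank_range_of_inj (LinearMap.ker_eq_bot.mp hker),
    LinearMap.range_domRestrict]
  exact le_sigPos_of_posDef Q hmap

theorem sigPos_comp_of_surjective (Q : QuadraticForm 𝕜 M) {f : M' →ₗ[𝕜] M}
    (hf : Function.Surjective f) : sigPos (Q.comp f) = sigPos Q := by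
  obtain ⟨g, hg⟩ := f.exists_rightInverse_of_surjective (LinearMap.range_eq_top.mpr hf)
  refine (sigPos_comp_le Q f).antisymm ?_
  have hQ : (Q.comp f).comp g = Q := by
    ext x
    exact congrArg Q (LinearMap.congr_fun hg x)
  calc sigPos Q = sigPos ((Q.comp f).comp g) := by rw [hQ]
    _ ≤ sigPos (Q.comp f) := sigPos_comp_le _ g

theorem sigNeg_comp_of_surjective (Q : QuadraticForm 𝕜 M) {f : M' →ₗ[𝕜] M}
    (hf : Function.Surjective f) : sigNeg (Q.comp f) = sigNeg Q :=
  sigPos_comp_of_surjective (-Q) hf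

end Signature

section Inertia

variable {m κ : Type*}

theorem vecMulLinear_surjective_of_linearIndependent_col {K : Type*} [Field K]
    [Fintype m] [Finite κ] {S : Matrix m κ K} (hS : LinearIndependent K S.col) :
    Function.Surjective S.vecMulLinear := by
  cases nonempty_fintype κ
  have hrank : Sᵀ.rank = Fintype.card κ := LinearIndependent.rank_matrix hS
  rw [← LinearMap.range_eq_top, ← mulVecLin_transpose]
  exact Submodule.eq_top_of_finrank_eq (hrank.trans (Module.finrank_fintype_fun_eq_card K).symm)

theorem linearIndependent_col_fromCols_iff {K κ₁ κ₂ : Type*} [Field K] [Fintype κ₁] [Fintype κ₂]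
    {P : Matrix m κ₁ K} {Q : Matrix m κ₂ K} :
    LinearIndependent K (fromCols P Q).col ↔ ∀ a b, P *ᵥ a + Q *ᵥ b = 0 → a = 0 ∧ b = 0 := by
  rw [← mulVec_injective_iff, ← coe_mulVecLin, ← LinearMap.ker_eq_bot, LinearMap.ker_eq_bot']
  simp only [mulVecLin_apply, fromCols_mulVec]
  refine ⟨fun h a b hab ↦ ?_, fun h z hz ↦ ?_⟩
  · have hz : Sum.elim a b = 0 := h _ hab
    exact ⟨congrArg (· ∘ Sum.inl) hz, congrArg (· ∘ Sum.inr) hz⟩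
  · obtain ⟨ha, hb⟩ := h _ _ hz
    ext (i | i)
    exacts [congrFun ha i, congrFun hb i]

theorem linearIndependent_col_fromCols_add_sub {K : Type*} [Field K] [NeZero (2 : K)] [Finite κ]
    {P Q : Matrix m κ K} (h : LinearIndependent K (fromCols P Q).col) :
    LinearIndependent K (fromCols (P + Q) (P - Q)).col := by
  cases nonempty_fintype κ
  rw [linearIndependent_col_fromCols_iff] at h ⊢
  intro a b hab
  obtain ⟨hsum, hdiff⟩ : a + b = 0 ∧ a - b = 0 := by
    refine h _ _ (hab ▸ ?_)
    simp only [mulVec_add, mulVec_sub, add_mulVec, sub_mulVec]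
    abel
  obtain rfl : a = b := sub_eq_zero.mp hdiff
  have ha : a = 0 := by
    rw [← two_smul K] at hsum
    exact (smul_eq_zero.mp hsum).resolve_left two_ne_zero
  exact ⟨ha, ha⟩

theorem mul_transpose_add_mul_transpose_eq_mul_diagonal [Fintype κ] [DecidableEq κ] {K : Type*}
    [Field K] [NeZero (2 : K)] (P Q : Matrix m κ K) :
    P * Qᵀ + Q * Pᵀ = fromCols (P + Q) (P - Q) *
      diagonal (Sum.elim (fun _ : κ ↦ (1 / 2 : K)) fun _ : κ ↦ -(1 / 2)) *
        (fromCols (P + Q) (P - Q))ᵀ := by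
  ext x y
  rw [Matrix.add_apply, mul_apply, mul_apply, mul_apply]
  simp only [mul_diagonal, transpose_apply, Fintype.sum_sum_type, Matrix.add_apply,
    fromCols_apply_inl, fromCols_apply_inr, Matrix.sub_apply, Sum.elim_inl, Sum.elim_inr,
    ← Finset.sum_add_distrib]
  refine Finset.sum_congr rfl fun i _ ↦ ?_
  have htwo : (2 : K) ≠ 0 := two_ne_zero
  field_simp
  ring

variable [Fintype m] [DecidableEq m] [Fintype κ]

theorem toQuadraticForm'_mul_diagonal_mul_transpose [DecidableEq κ] {R : Type*} [CommRing R]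
    (S : Matrix m κ R) (w : κ → R) :
    (S * diagonal w * Sᵀ).toQuadraticForm' =
      (QuadraticMap.weightedSumSquares R w).comp S.vecMulLinear := by
  ext x
  calc (S * diagonal w * Sᵀ).toQuadraticForm' x
      = x ⬝ᵥ (S * diagonal w * Sᵀ) *ᵥ x := by
        rw [toQuadraticForm', LinearMap.BilinMap.toQuadraticMap_apply, toLinearMap₂'_apply']
    _ = (x ᵥ* S) ⬝ᵥ diagonal w *ᵥ (x ᵥ* S) := by
        rw [← mulVec_mulVec, ← mulVec_mulVec, dotProduct_mulVec, mulVec_transpose]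
    _ = ((QuadraticMap.weightedSumSquares R w).comp S.vecMulLinear) x := by
        simp only [dotProduct, mulVec_diagonal, QuadraticMap.comp_apply, vecMulLinear_apply,
          QuadraticMap.weightedSumSquares_apply, smul_eq_mul]
        exact Finset.sum_congr rfl fun i _ ↦ by ring

theorem sigPos_mul_diagonal_mul_transpose [DecidableEq κ] {K : Type*} [Field K]
    [LinearOrder K] [IsStrictOrderedRing K] {S : Matrix m κ K} (hS : LinearIndependent K S.col)
    (w : κ → K) :
    sigPos (S * diagonal w * Sᵀ).toQuadraticForm' = {i | 0 < w i}.ncard := by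
  rw [toQuadraticForm'_mul_diagonal_mul_transpose,
    sigPos_comp_of_surjective _ (vecMulLinear_surjective_of_linearIndependent_col hS),
    QuadraticForm.sigPos_weightedSumSquares]

theorem sigNeg_mul_diagonal_mul_transpose [DecidableEq κ] {K : Type*} [Field K]
    [LinearOrder K] [IsStrictOrderedRing K] {S : Matrix m κ K} (hS : LinearIndependent K S.col)
    (w : κ → K) :
    sigNeg (S * diagonal w * Sᵀ).toQuadraticForm' = {i | w i < 0}.ncard := by
  rw [toQuadraticForm'_mul_diagonal_mul_transpose,
    sigNeg_comp_of_surjective _ (vecMulLinear_surjective_of_linearIndependent_col hS),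
    QuadraticForm.sigNeg_weightedSumSquares]

variable {A : Matrix m m ℝ}

theorem card_filter_roots_charpoly_eq_ncard (hA : A.IsHermitian) (p : ℝ → Prop)
    [DecidablePred p] :
    Multiset.card (A.charpoly.roots.filter p) = {i | p (hA.eigenvalues i)}.ncard := by
  rw [hA.roots_charpoly_eq_eigenvalues, Multiset.filter_map, Multiset.card_map,
    Set.ncard_eq_toFinset_card', Set.toFinset_ofPred]
  rfl

theorem exists_eq_mul_diagonal_eigenvalues_mul_transpose (hA : A.IsHermitian) :
    ∃ U : Matrix m m ℝ, LinearIndependent ℝ U.col ∧ A = U * diagonal hA.eigenvalues * Uᵀ :=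
  ⟨hA.eigenvectorUnitary,
    linearIndependent_cols_iff_isUnit.mpr (Unitary.isUnit_coe (U := hA.eigenvectorUnitary)),
    hA.spectral_theorem⟩

theorem posEigs_eq_sigPos (hA : A.IsHermitian) : posEigs A = sigPos A.toQuadraticForm' := by
  obtain ⟨U, hU, hAU⟩ := exists_eq_mul_diagonal_eigenvalues_mul_transpose hA
  rw [posEigs, card_filter_roots_charpoly_eq_ncard hA]
  conv_rhs => rw [hAU, sigPos_mul_diagonal_mul_transpose hU]

theorem negEigs_eq_sigNeg (hA : A.IsHermitian) : negEigs A = sigNeg A.toQuadraticForm' := by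
  obtain ⟨U, hU, hAU⟩ := exists_eq_mul_diagonal_eigenvalues_mul_transpose hA
  rw [negEigs, card_filter_roots_charpoly_eq_ncard hA]
  conv_rhs => rw [hAU, sigNeg_mul_diagonal_mul_transpose hU]

theorem card_filter_pos_add_card_filter_neg_add_card_filter_zero {α : Type*} [LinearOrder α]
    [Zero α] (s : Multiset α) :
    Multiset.card (s.filter fun x ↦ 0 < x) + Multiset.card (s.filter fun x ↦ x < 0) +
      Multiset.card (s.filter fun x ↦ x = 0) = Multiset.card s := by
  induction s using Multiset.induction_on with
  | empty => rfl
  | cons x s ih =>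
    have hx : (if 0 < x then 1 else 0) + (if x < 0 then 1 else 0) + (if x = 0 then 1 else 0) =
        1 := by
      rcases lt_trichotomy x 0 with hx | rfl | hx
      · simp [hx, hx.not_gt, hx.ne]
      · simp
      · simp [hx, hx.not_gt, hx.ne']
    simp only [← Multiset.countP_eq_card_filter, Multiset.countP_cons, Multiset.card_cons] at ih ⊢
    omega

theorem posEigs_add_negEigs_add_zeroEigs (hA : A.IsHermitian) :
    posEigs A + negEigs A + zeroEigs A = Fintype.card m := by
  calc posEigs A + negEigs A + zeroEigs A
      = Multiset.card A.charpoly.roots :=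
        card_filter_pos_add_card_filter_neg_add_card_filter_zero _
    _ = Fintype.card m := by
        rw [hA.roots_charpoly_eq_eigenvalues, Multiset.card_map, Finset.card_val,
          Finset.card_univ]

theorem inertia_mul_transpose_add_mul_transpose {P Q : Matrix m κ ℝ}
    (h : LinearIndependent ℝ (fromCols P Q).col) :
    posEigs (P * Qᵀ + Q * Pᵀ) = Fintype.card κ ∧ negEigs (P * Qᵀ + Q * Pᵀ) = Fintype.card κ ∧
      zeroEigs (P * Qᵀ + Q * Pᵀ) = Fintype.card m - 2 * Fintype.card κ := by
  classical
  have hM : (P * Qᵀ + Q * Pᵀ).IsHermitian := by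
    simp only [IsHermitian, conjTranspose_eq_transpose_of_trivial, transpose_add, transpose_mul,
      transpose_transpose, add_comm]
  have hS := linearIndependent_col_fromCols_add_sub h
  have hpos : posEigs (P * Qᵀ + Q * Pᵀ) = Fintype.card κ := by
    have hset : {s : κ ⊕ κ | (0 : ℝ) < Sum.elim (fun _ ↦ 1 / 2) (fun _ ↦ -(1 / 2)) s} =
        Set.range Sum.inl := by
      ext (i | i) <;> simp
    rw [posEigs_eq_sigPos hM, mul_transpose_add_mul_transpose_eq_mul_diagonal,
      sigPos_mul_diagonal_mul_transpose hS, hset,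
      Set.ncard_range_of_injective Sum.inl_injective, Nat.card_eq_fintype_card]
  have hneg : negEigs (P * Qᵀ + Q * Pᵀ) = Fintype.card κ := by
    have hset : {s : κ ⊕ κ | Sum.elim (fun _ ↦ 1 / 2) (fun _ ↦ -(1 / 2)) s < (0 : ℝ)} =
        Set.range Sum.inr := by
      ext (i | i) <;> simp
    rw [negEigs_eq_sigNeg hM, mul_transpose_add_mul_transpose_eq_mul_diagonal,
      sigNeg_mul_diagonal_mul_transpose hS, hset,
      Set.ncard_range_of_injective Sum.inr_injective, Nat.card_eq_fintype_card]
  have hsum := posEigs_add_negEigs_add_zeroEigs hM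
  exact ⟨hpos, hneg, by omega⟩

end Inertia

section Branch

variable {V : Type*} {G : SimpleGraph V} {a b c v x y z : V}

/-- The branch of `G` at `a` through its neighbour `b`: the component of `b` after the edge `ab` is
deleted. -/
def branch (G : SimpleGraph V) (a b : V) : Set V :=
  {v | (G.deleteEdges {s(a, b)}).Reachable b v}

theorem mem_branch_self : b ∈ branch G a b :=
  Reachable.rfl

theorem notMem_branch_of_isBridge (hab : G.IsBridge s(a, b)) : a ∉ branch G a b :=
  fun ha ↦ isBridge_iff.mp hab ha.symm

theorem mem_edges_of_mem_branch_of_notMem_branch (hx : x ∈ branch G a b) (hy : y ∉ branch G a b)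
    (p : G.Walk x y) : s(a, b) ∈ p.edges :=
  by_contra fun hp ↦ hy (hx.trans (reachable_deleteEdges_iff_exists_walk.mpr ⟨p, hp⟩))

theorem exists_adj_mem_branch (hG : G.Connected) (hav : v ≠ a) :
    ∃ b, G.Adj a b ∧ v ∈ branch G a b := by
  obtain ⟨p, hp⟩ := hG.exists_isPath a v
  cases p with
  | nil => exact absurd rfl hav
  | cons hab q =>
    have ha := ((Walk.cons_isPath_iff hab q).mp hp).2
    exact ⟨_, hab, reachable_deleteEdges_iff_exists_walk.mpr
      ⟨q, fun hq ↦ ha (q.fst_mem_support_of_mem_edges hq)⟩⟩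

theorem dist_eq_dist_add_dist_of_forall_mem_support (hxy : G.Reachable x y)
    (hz : ∀ p : G.Walk x y, z ∈ p.support) : G.dist x y = G.dist x z + G.dist z y := by
  classical
  obtain ⟨p, hp⟩ := hxy.exists_walk_length_eq_dist
  have hlen : (p.takeUntil z (hz p)).length + (p.dropUntil z (hz p)).length = p.length := by
    rw [← Walk.length_append, Walk.take_spec]
  have hleft := dist_le (p.takeUntil z (hz p))
  have hright := dist_le (p.dropUntil z (hz p))
  have htri := (p.takeUntil z (hz p)).reachable.dist_triangle_left y
  omega

theorem dist_eq_dist_add_dist_of_mem_branch (hG : G.Connected) (hx : x ∈ branch G a b)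
    (hy : y ∉ branch G a b) : G.dist x y = G.dist a x + G.dist a y := by
  rw [dist_comm (u := a) (v := x)]
  exact dist_eq_dist_add_dist_of_forall_mem_support (hG x y) fun p ↦
    p.fst_mem_support_of_mem_edges (mem_edges_of_mem_branch_of_notMem_branch hx hy p)

theorem dist_eq_dist_add_one_of_mem_branch (hG : G.Connected) (hab : G.IsBridge s(a, b))
    (hv : v ∈ branch G a b) : G.dist a v = G.dist b v + 1 := by
  have hadj : G.Adj a b := hab.reachable_iff_adj.mp (hG a b)
  have h := dist_eq_dist_add_dist_of_forall_mem_support (hG v a) fun p ↦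
    p.snd_mem_support_of_mem_edges
      (mem_edges_of_mem_branch_of_notMem_branch hv (notMem_branch_of_isBridge hab) p)
  rwa [dist_comm, dist_comm (u := v), dist_eq_one_iff_adj.mpr hadj.symm] at h

theorem dist_add_two_le_of_mem_branch (hG : G.Connected) (hab : G.IsBridge s(a, b))
    (hx : x ∈ branch G a b) (hy : y ∈ branch G a b) :
    G.dist x y + 2 ≤ G.dist a x + G.dist a y := by
  have htri := hG.dist_triangle (u := x) (v := b) (w := y)
  rw [dist_comm (u := x) (v := b)] at htri
  rw [dist_eq_dist_add_one_of_mem_branch hG hab hx,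
    dist_eq_dist_add_one_of_mem_branch hG hab hy]
  omega

theorem disjoint_branch (hG : G.Connected) (hab : G.IsBridge s(a, b))
    (hac : G.IsBridge s(a, c)) (hbc : b ≠ c) : Disjoint (branch G a b) (branch G a c) := by
  rw [Set.disjoint_left]
  intro v hvb hvc
  have hac1 : G.dist a c = 1 := dist_eq_one_iff_adj.mpr (hac.reachable_iff_adj.mp (hG a c))
  have hc : c ∉ branch G a b := fun hc ↦ by
    have hbc0 := dist_eq_dist_add_one_of_mem_branch hG hab hc
    exact hbc (hG.dist_eq_zero_iff.mp (by omega))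
  have hfar := dist_eq_dist_add_dist_of_mem_branch hG hvb hc
  have hnear := dist_eq_dist_add_one_of_mem_branch hG hac hvc
  rw [SimpleGraph.dist_comm] at hfar
  omega

theorem dist_deleteEdges_of_mem_branch (hG : G.Connected) (hab : G.IsBridge s(a, b))
    (hv : v ∈ branch G a b) : (G.deleteEdges {s(a, b)}).dist b v = G.dist b v := by
  classical
  obtain ⟨p, hp⟩ := hG.exists_walk_length_eq_dist b v
  have hedge : s(a, b) ∉ p.edges := fun hmem ↦ by
    have ha := p.fst_mem_support_of_mem_edges hmem
    have hle := (dist_le (p.dropUntil a ha)).trans (p.length_dropUntil_le_length ha)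
    rw [dist_eq_dist_add_one_of_mem_branch hG hab hv] at hle
    omega
  refine le_antisymm ?_ (Reachable.dist_anti (deleteEdges_le _) hv)
  calc (G.deleteEdges {s(a, b)}).dist b v
      ≤ (p.toDeleteEdge _ hedge).length := dist_le _
    _ = p.length := p.length_transfer _
    _ = G.dist b v := hp

end Branch

section BranchEcc

variable {V : Type*} [Fintype V] [DecidableEq V] {G : SimpleGraph V} {a b v : V}

open Classical in
theorem branchEcc_eq_sup_branch (hG : G.Connected) (hab : G.IsBridge s(a, b)) :
    branchEcc G a b = (univ.filter (· ∈ branch G a b)).sup (G.dist b) := by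
  calc branchEcc G a b
      = univ.sup fun v ↦ if v ∈ branch G a b then (G.deleteEdges {s(a, b)}).dist b v else 0 := by
        rw [branchEcc, eccWithin]
        congr!
    _ = (univ.filter (· ∈ branch G a b)).sup ((G.deleteEdges {s(a, b)}).dist b) := by
        rw [Finset.sup_ite]
        exact sup_eq_left.mpr (Finset.sup_le fun _ _ ↦ Nat.zero_le _)
    _ = (univ.filter (· ∈ branch G a b)).sup (G.dist b) :=
        Finset.sup_congr rfl fun v hv ↦
          dist_deleteEdges_of_mem_branch hG hab (Finset.mem_filter.mp hv).2

theorem dist_le_branchEcc_add_one (hG : G.Connected) (hab : G.IsBridge s(a, b))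
    (hv : v ∈ branch G a b) : G.dist a v ≤ branchEcc G a b + 1 := by
  classical
  rw [dist_eq_dist_add_one_of_mem_branch hG hab hv, branchEcc_eq_sup_branch hG hab]
  exact Nat.add_le_add_right (Finset.le_sup (by simpa using hv)) 1

theorem exists_mem_branch_dist_eq_branchEcc_add_one (hG : G.Connected)
    (hab : G.IsBridge s(a, b)) : ∃ v ∈ branch G a b, G.dist a v = branchEcc G a b + 1 := by
  classical
  obtain ⟨v, hv, hmax⟩ := Finset.exists_mem_eq_sup (univ.filter (· ∈ branch G a b))
    ⟨b, by simpa using mem_branch_self⟩ (G.dist b)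
  have hv : v ∈ branch G a b := by simpa using hv
  exact ⟨v, hv, by
    rw [dist_eq_dist_add_one_of_mem_branch hG hab hv, branchEcc_eq_sup_branch hG hab, hmax]⟩

end BranchEcc

/-- `IsDeepBranching G c d u` says that no vertex of `G` is farther than `d` from `c`, and that the
vertices at distance `d` from `c`, called *deep*, are spread over branches at `c` hanging from
distinct bridges `c — u i`, each of these branches containing at least one of them. -/
structure IsDeepBranching {V ι : Type*} (G : SimpleGraph V) (c : V) (d : ℕ) (u : ι → V) :
    Prop where
  connected : G.Connected
  injective : Function.Injective u
  isBridge (i : ι) : G.IsBridge s(c, u i)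
  dist_le (v : V) : G.dist c v ≤ d
  exists_deep (i : ι) : ∃ v ∈ branch G c (u i), G.dist c v = d
  exists_mem_branch (v : V) (hv : G.dist c v = d) : ∃ i, v ∈ branch G c (u i)

open Classical in
/-- The incidence matrix of deep vertices (those at distance `d` from `c`) in the branches at `c`
through the `u i`; the factor `E` in the decomposition `D * Eᵀ + E * Dᵀ` of the eccentricity
matrix. -/
noncomputable def deepIncMatrix {V ι : Type*} (G : SimpleGraph V) (c : V) (d : ℕ) (u : ι → V) :
    Matrix V ι ℝ :=
  of fun v i ↦ if v ∈ branch G c (u i) ∧ G.dist c v = d then 1 else 0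

open Classical in
/-- The entry at `(v, i)` is the distance from `v` to the deep vertices of the branch at `c` through
`u i` when `v` lies outside this branch, and `0` inside. The distance is halved when `v` is deep
itself, because `D * Eᵀ + E * Dᵀ`, with `D` this matrix and `E` the incidence matrix, counts a pair
of deep vertices twice. -/
noncomputable def deepDistMatrix {V ι : Type*} (G : SimpleGraph V) (c : V) (d : ℕ) (u : ι → V) :
    Matrix V ι ℝ :=
  of fun v i ↦ if v ∈ branch G c (u i) then 0 else
    if G.dist c v = d then (d : ℝ) else d + G.dist c v

theorem deepIncMatrix_row_of_not_deep {V ι : Type*} {G : SimpleGraph V} {c v : V} {d : ℕ}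
    {u : ι → V} (hv : G.dist c v ≠ d) : (deepIncMatrix G c d u).row v = 0 := by
  ext i
  simp [deepIncMatrix, hv]

theorem eccMatrix_apply_comm {V : Type*} [Fintype V] (G : SimpleGraph V) (x y : V) :
    eccMatrix G x y = eccMatrix G y x := by
  simp only [eccMatrix, of_apply, SimpleGraph.dist_comm (u := x), min_comm (ecc G x)]

namespace IsDeepBranching

variable {V ι : Type*} {G : SimpleGraph V} {c : V} {d : ℕ} {u : ι → V}

theorem of_branchEcc_eq [Fintype V] [DecidableEq V] (hG : G.Connected)
    (hbridge : ∀ v, G.Adj c v → G.IsBridge s(c, v)) (hd : 0 < d) (hc : ecc G c = d)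
    (hinj : Function.Injective u) (hadj : ∀ i, G.Adj c (u i))
    (hu : ∀ i, branchEcc G c (u i) = d - 1)
    (hexact : ∀ v, G.Adj c v → branchEcc G c v = d - 1 → ∃ i, v = u i) :
    IsDeepBranching G c d u := by
  have hdist (v : V) : G.dist c v ≤ d := hc ▸ Finset.le_sup (Finset.mem_univ v)
  refine ⟨hG, hinj, fun i ↦ hbridge _ (hadj i), hdist, fun i ↦ ?_, fun v hv ↦ ?_⟩
  · obtain ⟨v, hv, hmax⟩ :=
      exists_mem_branch_dist_eq_branchEcc_add_one hG (hbridge _ (hadj i))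
    have hui := hu i
    exact ⟨v, hv, by omega⟩
  · obtain ⟨b, hb, hvb⟩ := exists_adj_mem_branch hG (a := c) (v := v) <| by
      rintro rfl
      rw [SimpleGraph.dist_self] at hv
      omega
    have hlow := dist_le_branchEcc_add_one hG (hbridge b hb) hvb
    obtain ⟨w, -, hw⟩ := exists_mem_branch_dist_eq_branchEcc_add_one hG (hbridge b hb)
    have hwd := hdist w
    obtain ⟨i, rfl⟩ := hexact b hb (by omega)
    exact ⟨i, hvb⟩

variable (h : IsDeepBranching G c d u) {i j : ι} {v x y : V}
include h

theorem notMem_branch_center (i : ι) : c ∉ branch G c (u i) :=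
  notMem_branch_of_isBridge (h.isBridge i)

theorem dist_neighbor (i : ι) : G.dist c (u i) = 1 :=
  dist_eq_one_iff_adj.mpr ((h.isBridge i).reachable_iff_adj.mp (h.connected c (u i)))

theorem mem_branch_iff_eq (hv : v ∈ branch G c (u i)) : v ∈ branch G c (u j) ↔ i = j := by
  refine ⟨fun hvj ↦ by_contra fun hij ↦ ?_, fun hij ↦ hij ▸ hv⟩
  exact (disjoint_branch h.connected (h.isBridge i) (h.isBridge j)
    (h.injective.ne hij)).notMem_of_mem_left hv hvj

theorem exists_notMem_branch [Nontrivial ι] (v : V) : ∃ i, v ∉ branch G c (u i) := by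
  obtain ⟨i, j, hij⟩ := exists_pair_ne ι
  by_cases hv : v ∈ branch G c (u i)
  · exact ⟨j, mt (h.mem_branch_iff_eq hv).mp hij⟩
  · exact ⟨i, hv⟩

theorem ecc_eq [Fintype V] [Nontrivial ι] (v : V) : ecc G v = d + G.dist c v := by
  refine le_antisymm (Finset.sup_le fun w _ ↦ ?_) ?_
  · have htri := h.connected.dist_triangle (u := v) (v := c) (w := w)
    have hw := h.dist_le w
    rw [SimpleGraph.dist_comm (u := v) (v := c)] at htri
    omega
  · obtain ⟨i, hi⟩ := h.exists_notMem_branch v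
    obtain ⟨w, hw, hwd⟩ := h.exists_deep i
    calc d + G.dist c v = G.dist v w := by
          rw [SimpleGraph.dist_comm (u := v),
            dist_eq_dist_add_dist_of_mem_branch h.connected hw hi, hwd]
      _ ≤ ecc G v := Finset.le_sup (Finset.mem_univ w)

theorem eccMatrix_apply_of_not_deep [Fintype V] [Nontrivial ι] (hx : G.dist c x ≠ d)
    (hy : G.dist c y ≠ d) : eccMatrix G x y = 0 := by
  have htri := h.connected.dist_triangle (u := x) (v := c) (w := y)
  have hxd := h.dist_le x
  have hyd := h.dist_le y
  rw [SimpleGraph.dist_comm (u := x) (v := c)] at htri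
  rw [eccMatrix, of_apply, h.ecc_eq, h.ecc_eq, if_neg (by omega)]

open Classical in
theorem eccMatrix_apply_of_deep [Fintype V] [Nontrivial ι] (hy : y ∈ branch G c (u j))
    (hyd : G.dist c y = d) :
    eccMatrix G x y = if x ∈ branch G c (u j) then 0 else (d + G.dist c x : ℝ) := by
  have hxd := h.dist_le x
  rw [eccMatrix, of_apply, h.ecc_eq, h.ecc_eq, hyd]
  split_ifs with hdist hx hx
  · have hnear := dist_add_two_le_of_mem_branch h.connected (h.isBridge j) hx hy
    omega
  · rw [hdist, min_eq_left (by omega), Nat.cast_add]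
  · rfl
  · have hfar := dist_eq_dist_add_dist_of_mem_branch h.connected hy hx
    rw [SimpleGraph.dist_comm] at hfar
    omega

theorem deepIncMatrix_row_of_deep [DecidableEq ι] (hv : v ∈ branch G c (u j))
    (hvd : G.dist c v = d) : (deepIncMatrix G c d u).row v = Pi.single j 1 := by
  ext i
  simp [deepIncMatrix, h.mem_branch_iff_eq hv, hvd, Pi.single_apply, eq_comm]

theorem eccMatrix_apply_eq_of_deep [Fintype V] [Fintype ι] [Nontrivial ι]
    (hyd : G.dist c y = d) :
    eccMatrix G x y =
      (deepDistMatrix G c d u).row x ⬝ᵥ (deepIncMatrix G c d u).row y +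
        (deepDistMatrix G c d u).row y ⬝ᵥ (deepIncMatrix G c d u).row x := by
  classical
  obtain ⟨j, hy⟩ := h.exists_mem_branch y hyd
  rw [h.eccMatrix_apply_of_deep hy hyd, h.deepIncMatrix_row_of_deep hy hyd,
    dotProduct_single_one]
  by_cases hxd : G.dist c x = d
  · obtain ⟨i, hx⟩ := h.exists_mem_branch x hxd
    have hij : i = j ↔ j = i := eq_comm
    rw [h.deepIncMatrix_row_of_deep hx hxd, dotProduct_single_one]
    simp only [row_apply, deepDistMatrix, of_apply, hxd, hyd, h.mem_branch_iff_eq hx,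
      h.mem_branch_iff_eq hy, hij, if_true]
    split_ifs <;> simp
  · rw [deepIncMatrix_row_of_not_deep hxd, dotProduct_zero, add_zero]
    simp only [row_apply, deepDistMatrix, of_apply, if_neg hxd]

theorem eccMatrix_eq_mul_transpose_add_mul_transpose [Fintype V] [Fintype ι]
    [Nontrivial ι] :
    eccMatrix G = deepDistMatrix G c d u * (deepIncMatrix G c d u)ᵀ +
      deepIncMatrix G c d u * (deepDistMatrix G c d u)ᵀ := by
  set D := deepDistMatrix G c d u
  set E := deepIncMatrix G c d u
  ext x y
  have hentry : (D * Eᵀ + E * Dᵀ) x y = D.row x ⬝ᵥ E.row y + D.row y ⬝ᵥ E.row x := by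
    rw [dotProduct_comm (D.row y)]
    rfl
  rw [hentry]
  by_cases hy : G.dist c y = d
  · exact h.eccMatrix_apply_eq_of_deep hy
  by_cases hx : G.dist c x = d
  · rw [eccMatrix_apply_comm, h.eccMatrix_apply_eq_of_deep hx, add_comm]
  · rw [h.eccMatrix_apply_of_not_deep hx hy, deepIncMatrix_row_of_not_deep hx,
      deepIncMatrix_row_of_not_deep hy, dotProduct_zero, dotProduct_zero, add_zero]

theorem deepDistMatrix_row_center (hd : d ≠ 0) :
    (deepDistMatrix G c d u).row c = (d : ℝ) • 1 := by
  ext i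
  simp [deepDistMatrix, h.notMem_branch_center, hd.symm]

theorem deepDistMatrix_row_neighbor [DecidableEq ι] (hd : d ≠ 1) (j : ι) :
    (deepDistMatrix G c d u).row (u j) = (d + 1 : ℝ) • (1 - Pi.single j 1) := by
  ext i
  simp only [row_apply, deepDistMatrix, of_apply, h.mem_branch_iff_eq mem_branch_self,
    h.dist_neighbor, if_neg hd.symm, Nat.cast_one, Pi.smul_apply, Pi.sub_apply, Pi.one_apply,
    Pi.single_apply, eq_comm (a := j), smul_eq_mul]
  split_ifs <;> simp

theorem linearIndependent_col_deepDistMatrix_deepIncMatrix [Finite ι] (hd : 2 ≤ d) :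
    LinearIndependent ℝ (fromCols (deepDistMatrix G c d u) (deepIncMatrix G c d u)).col := by
  classical
  cases nonempty_fintype ι
  refine linearIndependent_col_fromCols_iff.mpr fun a b hab ↦ ?_
  have hrow (v : V) : (deepDistMatrix G c d u).row v ⬝ᵥ a +
      (deepIncMatrix G c d u).row v ⬝ᵥ b = 0 := congrFun hab v
  have hshallow (v : V) (hv : G.dist c v ≠ d) : (deepDistMatrix G c d u).row v ⬝ᵥ a = 0 := by
    simpa [deepIncMatrix_row_of_not_deep hv] using hrow v
  have hsum : ∑ i, a i = 0 := by
    have hc := hshallow c (by rw [SimpleGraph.dist_self]; omega)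
    rw [h.deepDistMatrix_row_center (by omega), smul_dotProduct, one_dotProduct] at hc
    exact (smul_eq_zero.mp hc).resolve_left (by positivity)
  have ha : a = 0 := by
    ext i
    have hi := hshallow (u i) (by rw [h.dist_neighbor]; omega)
    rw [h.deepDistMatrix_row_neighbor (by omega), smul_dotProduct, sub_dotProduct,
      one_dotProduct, single_one_dotProduct, hsum, zero_sub] at hi
    exact neg_eq_zero.mp ((smul_eq_zero.mp hi).resolve_left (by positivity))
  have hb : b = 0 := by
    ext i
    obtain ⟨w, hw, hwd⟩ := h.exists_deep i
    simpa [ha, h.deepIncMatrix_row_of_deep hw hwd] using hrow w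
  exact ⟨ha, hb⟩

end IsDeepBranching

theorem stmt4_general {V ι : Type*} [Fintype V] [DecidableEq V] [Fintype ι] [Nontrivial ι]
    {G : SimpleGraph V} {c : V} {d : ℕ} {u : ι → V} (h : IsDeepBranching G c d u) (hd : 2 ≤ d) :
    posEigs (eccMatrix G) = Fintype.card ι ∧ negEigs (eccMatrix G) = Fintype.card ι ∧
      zeroEigs (eccMatrix G) = Fintype.card V - 2 * Fintype.card ι := by
  rw [h.eccMatrix_eq_mul_transpose_add_mul_transpose]
  exact inertia_mul_transpose_add_mul_transpose
    (h.linearIndependent_col_deepDistMatrix_deepIncMatrix hd)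

/-- For a tree with even diameter `2d`, centre `u₀` and `u₁, …, u_l` exactly the neighbours of
`u₀` whose branch has eccentricity `d-1`, the inertia of the eccentricity matrix is
`(l, l, n - 2l)`. -/
theorem stmt4 {V : Type*} [Fintype V] [DecidableEq V] (T : SimpleGraph V) (n d l : ℕ)
    (hT : T.IsTree) (hn : Fintype.card V = n) (hd : 2 ≤ d) (hdiam : gdiam T = 2*d)
    (u₀ : V) (hcen : ecc T u₀ = d)
    (hl : 2 ≤ l) (u : Fin l → V) (hinj : Function.Injective u)
    (hadj : ∀ i : Fin l, T.Adj u₀ (u i))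
    (hbranch : ∀ i : Fin l, branchEcc T u₀ (u i) = d - 1)
    (hexact : ∀ v : V, T.Adj u₀ v → branchEcc T u₀ v = d - 1 → ∃ i : Fin l, v = u i) :
    posEigs (eccMatrix T) = l ∧ negEigs (eccMatrix T) = l ∧
      zeroEigs (eccMatrix T) = n - 2*l := by
  have : Nontrivial (Fin l) := Fin.nontrivial_iff_two_le.mpr hl
  simpa only [Fintype.card_fin, hn] using stmt4_general (IsDeepBranching.of_branchEcc_eq
    hT.connected (fun _ hv ↦ isAcyclic_iff_forall_adj_isBridge.mp hT.isAcyclic hv) (by omega)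
    hcen hinj hadj hbranch hexact) hd
end
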